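/- arXiv:2603.21080 — 5 statements merged into one kernel-verified Lean document; each statement's English description precedes it below -/
import Mathlib

section
/- Suppose s, t, λ > 0, r ∈ ℝ and k ∈ SO₂(ℝ) satisfy a_s · h_t = k · a_λ · u_r. Then |r| + 1 ≥ t⁻². In particular, if t ≤ 1/11 then |r| ≥ 100. -/
/-!
Passing to Gram matrices (`M ↦ Mᵀ * M`) eliminates the rotation `k`. Let `c` be the common squared
length of the two columns of `a_λ`, and `C` that of the columns of `a_s`. Comparing diagonal entries
gives `t² C = c` and `t⁻² C = c r² + 2 d r + c`, where `d` is the inner product of the columns of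
`a_λ`. Cauchy–Schwarz gives `|d| ≤ c`, so `t⁻⁴ c = t⁻² C ≤ c (|r| + 1)²`; divide by `c > 0` and take
square roots.
-/

open Matrix

/-- The matrix `a_s = [[(s+s⁻¹)/2, (s−s⁻¹)/2], [(s−s⁻¹)/2, (s+s⁻¹)/2]]`. -/
noncomputable def aMat (s : ℝ) : Matrix (Fin 2) (Fin 2) ℝ :=
  !![(s + s⁻¹) / 2, (s - s⁻¹) / 2; (s - s⁻¹) / 2, (s + s⁻¹) / 2]

/-- The diagonal matrix `h_t = [[t, 0], [0, t⁻¹]]`. -/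
noncomputable def hMat (t : ℝ) : Matrix (Fin 2) (Fin 2) ℝ := !![t, 0; 0, t⁻¹]

/-- The unipotent matrix `u_r = [[1, r], [0, 1]]`. -/
def uMat (r : ℝ) : Matrix (Fin 2) (Fin 2) ℝ := !![1, r; 0, 1]

/-- `SO₂(ℝ)`: real orthogonal 2×2 matrices of determinant 1 (rotation matrices). -/
def SO2 (k : Matrix (Fin 2) (Fin 2) ℝ) : Prop :=
  k ∈ Matrix.orthogonalGroup (Fin 2) ℝ ∧ k.det = 1

/-- If `a_s · h_t = k · a_λ · u_r` with `s, t, λ > 0`, `r ∈ ℝ` and `k ∈ SO₂(ℝ)`,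
then `|r| + 1 ≥ t⁻²`; in particular if `t ≤ 1/11` then `|r| ≥ 100`. -/
theorem abs_r_add_one_ge_t_inv_sq (s t lam r : ℝ) (k : Matrix (Fin 2) (Fin 2) ℝ)
    (hs : 0 < s) (ht : 0 < t) (hlam : 0 < lam) (hk : SO2 k)
    (heq : aMat s * hMat t = k * aMat lam * uMat r) :
    t⁻¹ ^ 2 ≤ |r| + 1 ∧ (t ≤ 1 / 11 → 100 ≤ |r|) := by
  obtain ⟨hk, -⟩ := hk
  have hkk : kᵀ * k = 1 := by
    simpa [Matrix.star_eq_conjTranspose] using (Matrix.mem_orthogonalGroup_iff' (Fin 2) ℝ).1 hk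
  have hgram : (aMat s * hMat t)ᵀ * (aMat s * hMat t)
      = (aMat lam * uMat r)ᵀ * (aMat lam * uMat r) := by
    rw [heq, Matrix.mul_assoc k, Matrix.transpose_mul k, Matrix.mul_assoc,
      ← Matrix.mul_assoc kᵀ, hkk, Matrix.one_mul]
  have h00 := congrFun (congrFun hgram 0) 0
  have h11 := congrFun (congrFun hgram 1) 1
  have hp : 0 < (lam + lam⁻¹) / 2 := by positivity
  simp only [aMat, hMat, uMat, Matrix.mul_apply, Matrix.transpose_apply, Fin.sum_univ_two,
    Matrix.of_apply, Matrix.cons_val', Matrix.cons_val_zero, Matrix.cons_val_one,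
    Matrix.cons_val_fin_one] at h00 h11
  generalize (lam + lam⁻¹) / 2 = p at *
  generalize (lam - lam⁻¹) / 2 = q at *
  generalize (s + s⁻¹) / 2 = P at *
  generalize (s - s⁻¹) / 2 = Q at *
  have hc : 0 < p ^ 2 + q ^ 2 := by positivity
  have ht1 : t⁻¹ * t = 1 := inv_mul_cancel₀ ht.ne'
  have hmain : (p ^ 2 + q ^ 2) * (t⁻¹ ^ 2) ^ 2
      = (p ^ 2 + q ^ 2) * r ^ 2 + 4 * p * q * r + (p ^ 2 + q ^ 2) := by
    have e1 : (P ^ 2 + Q ^ 2) * t ^ 2 = p ^ 2 + q ^ 2 := by linear_combination h00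
    rw [← e1]
    have e2 : t⁻¹ ^ 2 * t ^ 2 = 1 := by rw [← mul_pow, ht1, one_pow]
    linear_combination h11 + (P ^ 2 + Q ^ 2) * t⁻¹ ^ 2 * e2 - (1 + r ^ 2) * e1
  have hcross : 4 * p * q * r ≤ 2 * (p ^ 2 + q ^ 2) * |r| := by
    rcases abs_cases r with ⟨h, h'⟩ | ⟨h, h'⟩ <;> rw [h]
    · nlinarith [mul_nonneg h' (sq_nonneg (p - q))]
    · nlinarith [mul_nonneg (neg_nonneg.2 h'.le) (sq_nonneg (p + q))]
  have hbound : t⁻¹ ^ 2 ≤ |r| + 1 := by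
    refine (sq_le_sq₀ (by positivity) (by positivity)).1 ?_
    refine le_of_mul_le_mul_left ?_ hc
    rw [hmain]
    linear_combination hcross - (p ^ 2 + q ^ 2) * sq_abs r
  refine ⟨hbound, fun h => ?_⟩
  have h' : 11 ≤ t⁻¹ := by
    rw [le_inv_comm₀ (by norm_num) ht]
    simpa using h
  nlinarith
end

section
/- Suppose s, t, λ > 0, r ∈ ℝ and k ∈ SO₂(ℝ) satisfy a_s · h_t = k · a_λ · u_r⁻. Then |r| + 1 ≥ t². In particular, if t ≥ 11 then |r| ≥ 100. -/
/-!
Comparing Gram matrices eliminates the rotation `k`. With `C = (s² + s⁻²)/2`, `c = (λ² + λ⁻²)/2`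
and `d = (λ² - λ⁻²)/2`, the squared norms of the two columns give
`t² C = c + 2 r d + r² c` and `t⁻² C = c`. Hence `t⁴ c = c + 2 r d + r² c ≤ (1 + |r|)² c`
because `|d| ≤ c`, and the bound follows on dividing by `c > 0` and taking square roots.
-/

open Matrix

/-- The lower unipotent matrix `u_r⁻ = [[1, 0], [r, 1]]`. -/
def uNegMat (r : ℝ) : Matrix (Fin 2) (Fin 2) ℝ := !![1, 0; r, 1]

/-- If `a_s · h_t = k · a_λ · u_r⁻` with `s, t, λ > 0`, `r ∈ ℝ` and `k ∈ SO₂(ℝ)`,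
then `|r| + 1 ≥ t²`; in particular if `t ≥ 11` then `|r| ≥ 100`. -/
theorem abs_r_add_one_ge_t_sq (s t lam r : ℝ) (k : Matrix (Fin 2) (Fin 2) ℝ)
    (hs : 0 < s) (ht : 0 < t) (hlam : 0 < lam) (hk : SO2 k)
    (heq : aMat s * hMat t = k * aMat lam * uNegMat r) :
    t ^ 2 ≤ |r| + 1 ∧ (11 ≤ t → 100 ≤ |r|) := by
  -- The orthogonal factor `k` cancels in the Gram matrices.
  have hG : (aMat s * hMat t)ᵀ * (aMat s * hMat t)
      = (aMat lam * uNegMat r)ᵀ * (aMat lam * uNegMat r) := by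
    have hkk : kᵀ * k = 1 := by
      simpa [Matrix.star_eq_conjTranspose] using (Matrix.mem_orthogonalGroup_iff' (Fin 2) ℝ).1 hk.1
    rw [heq, Matrix.mul_assoc k, Matrix.transpose_mul k, Matrix.mul_assoc, ← Matrix.mul_assoc kᵀ,
      hkk, Matrix.one_mul]
  have h00 := congrFun (congrFun hG 0) 0
  have h11 := congrFun (congrFun hG 1) 1
  simp only [aMat, hMat, uNegMat, Matrix.mul_apply, Matrix.transpose_apply, Fin.sum_univ_two,
    Matrix.of_apply, Matrix.cons_val', Matrix.cons_val_zero, Matrix.cons_val_one,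
    Matrix.cons_val_fin_one] at h00 h11
  -- `C`, and `c`, `d`, are the entries of `a_s ^ 2` and `a_λ ^ 2`.
  obtain ⟨C, hC⟩ : ∃ C, C = (s ^ 2 + s⁻¹ ^ 2) / 2 := ⟨_, rfl⟩
  obtain ⟨c, hc⟩ : ∃ c, c = (lam ^ 2 + lam⁻¹ ^ 2) / 2 := ⟨_, rfl⟩
  obtain ⟨d, hd⟩ : ∃ d, d = (lam ^ 2 - lam⁻¹ ^ 2) / 2 := ⟨_, rfl⟩
  have h1 : t ^ 2 * C = c + 2 * r * d + r ^ 2 * c := by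
    rw [hC, hc, hd]; linear_combination h00
  have h2 : t⁻¹ ^ 2 * C = c := by
    rw [hC, hc]; linear_combination h11
  have hcpos : 0 < c := by rw [hc]; positivity
  have hdc : |d| ≤ c := by
    rw [abs_le, hc, hd]
    constructor <;> nlinarith [sq_nonneg lam, sq_nonneg lam⁻¹]
  have hCt : C = t ^ 2 * c := by
    rw [← h2]; field_simp
  have hrd : r * d ≤ |r| * c :=
    (le_abs_self _).trans (by rw [abs_mul]; gcongr)
  have hsq : (t ^ 2) ^ 2 ≤ (|r| + 1) ^ 2 := by
    refine le_of_mul_le_mul_right ?_ hcpos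
    rw [hCt] at h1
    have hr : r ^ 2 = |r| ^ 2 := (sq_abs r).symm
    rw [hr] at h1
    linarith
  have hmain : t ^ 2 ≤ |r| + 1 := (sq_le_sq₀ (by positivity) (by positivity)).1 hsq
  exact ⟨hmain, fun h => by nlinarith⟩
end

section
/- For every real number r with |r| ≥ 100 and every choice of signs ⋆, ✦ ∈ {+, −}, the Frobenius distance from w_r^⋆ to the linear subspace 𝔙^{0✦} is at least 0.1, i.e. ‖w_r^⋆ − V‖ ≥ 0.1 for every V ∈ 𝔙^{0✦}. -/
/-!
Each `𝔙^{0±}` is contained in the kernel of the linear functional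
`L_ε(A) = A₀₁ - A₁₀ + ε (A₀₀ - A₁₁)`, with `ε = 1` for `+` and `ε = -1` for `-`
(`frakV_functional`). By Cauchy–Schwarz `|L_ε(A)| ≤ 2 ‖A‖` (`abs_functional_le`), since the
coefficient vector of `L_ε` has norm `2`. On `w_r^±` the functional is `∓2r/⌊|r|⌋ + 2ε/⌊|r|⌋`,
whose first term has absolute value at least `2` and whose second at most `1` (in fact `0.02`);
the crude bound already gives distance at least `1/2`.
-/

open Matrix

/-- The rotation by 45°: `k₄₅ = (1/√2)·[[1,−1],[1,1]]`. -/
noncomputable def k45 : Matrix (Fin 2) (Fin 2) ℝ := (Real.sqrt 2)⁻¹ • !![1, -1; 1, 1]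

/-- `𝔘^{0+}`: traceless upper-triangular real 2×2 matrices. -/
def frakUplus : Set (Matrix (Fin 2) (Fin 2) ℝ) := {M | ∃ x y : ℝ, M = !![x, y; 0, -x]}

/-- `𝔘^{0−}`: traceless lower-triangular real 2×2 matrices. -/
def frakUminus : Set (Matrix (Fin 2) (Fin 2) ℝ) := {M | ∃ x y : ℝ, M = !![x, 0; y, -x]}

/-- `𝔙^{0±} = k₄₅ · 𝔘^{0±} · k₄₅⁻¹`, where the sign is encoded by a boolean
(`true` for `+`, `false` for `−`). -/
noncomputable def frakV (sgn : Bool) : Set (Matrix (Fin 2) (Fin 2) ℝ) :=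
  {M | ∃ U ∈ (if sgn then frakUplus else frakUminus), M = k45 * U * k45⁻¹}

/-- `w_r^±` (the sign is encoded by a boolean, `true` for `+`, `false` for `−`). -/
noncomputable def wMat (sgn : Bool) (r : ℝ) : Matrix (Fin 2) (Fin 2) ℝ :=
  if sgn then !![((⌊|r|⌋ : ℝ))⁻¹, -2 * r / (⌊|r|⌋ : ℝ); 0, -((⌊|r|⌋ : ℝ))⁻¹]
  else !![((⌊|r|⌋ : ℝ))⁻¹, 0; -2 * r / (⌊|r|⌋ : ℝ), -((⌊|r|⌋ : ℝ))⁻¹]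

/-- Frobenius norm `‖A‖ = sqrt(tr(A·Aᵀ))` of a real 2×2 matrix. -/
noncomputable def frobNorm (A : Matrix (Fin 2) (Fin 2) ℝ) : ℝ :=
  Real.sqrt ((A * Aᵀ).trace)

theorem k45_inv : k45⁻¹ = (Real.sqrt 2)⁻¹ • !![1, 1; -1, 1] := by
  have h2 : (Real.sqrt 2)⁻¹ * (Real.sqrt 2)⁻¹ = 1 / 2 := by
    rw [← mul_inv, Real.mul_self_sqrt (by norm_num)]; norm_num
  apply Matrix.inv_eq_right_inv
  rw [k45, smul_mul_smul_comm, h2]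
  ext i j
  fin_cases i <;> fin_cases j <;> norm_num [Matrix.mul_apply, Fin.sum_univ_two]

theorem k45_conj (U : Matrix (Fin 2) (Fin 2) ℝ) :
    k45 * U * k45⁻¹ = (1 / 2 : ℝ) • (!![1, -1; 1, 1] * U * !![1, 1; -1, 1]) := by
  have h2 : (Real.sqrt 2)⁻¹ * (Real.sqrt 2)⁻¹ = 1 / 2 := by
    rw [← mul_inv, Real.mul_self_sqrt (by norm_num)]; norm_num
  rw [k45_inv, k45, smul_mul_assoc, smul_mul_smul_comm, h2]

/-- Every element of `𝔙^{0±}` satisfies the linear equation `L_ε = 0`. -/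
theorem frakV_functional (s : Bool) (V : Matrix (Fin 2) (Fin 2) ℝ) (hV : V ∈ frakV s) :
    V 0 1 - V 1 0 + (if s then 1 else -1) * (V 0 0 - V 1 1) = 0 := by
  obtain ⟨U, hU, rfl⟩ := hV
  rw [k45_conj]
  cases s
  all_goals
    obtain ⟨x, y, rfl⟩ := hU
    simp
    ring

/-- Cauchy–Schwarz for a functional all of whose coefficients are `±1`. -/
theorem abs_functional_le (e : ℝ) (he : e ^ 2 = 1) (A : Matrix (Fin 2) (Fin 2) ℝ) :
    |A 0 1 - A 1 0 + e * (A 0 0 - A 1 1)| ≤ 2 * frobNorm A := by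
  have htr : (A * Aᵀ).trace = A 0 0 ^ 2 + A 0 1 ^ 2 + A 1 0 ^ 2 + A 1 1 ^ 2 := by
    simp [Matrix.trace, Matrix.mul_apply, Fin.sum_univ_two]
    ring
  have hnn : 0 ≤ frobNorm A := Real.sqrt_nonneg _
  apply abs_le_of_sq_le_sq _ (by positivity)
  rw [mul_pow, frobNorm, Real.sq_sqrt (by rw [htr]; positivity), htr]
  have h : e = 1 ∨ e = -1 := by simpa using he
  rcases h with rfl | rfl
  · nlinarith [sq_nonneg (A 0 1 + A 1 0), sq_nonneg (A 0 0 + A 1 1),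
      sq_nonneg (A 0 1 - A 1 0 - (A 0 0 - A 1 1))]
  · nlinarith [sq_nonneg (A 0 1 + A 1 0), sq_nonneg (A 0 0 + A 1 1),
      sq_nonneg (A 0 1 - A 1 0 + (A 0 0 - A 1 1))]

theorem wMat_functional_ge (r : ℝ) (hr : 100 ≤ |r|) (s : Bool) (e : ℝ) (he : |e| = 1) :
    1 ≤ |wMat s r 0 1 - wMat s r 1 0 + e * (wMat s r 0 0 - wMat s r 1 1)| := by
  have hn : (100 : ℝ) ≤ (⌊|r|⌋ : ℝ) := by
    have : (100 : ℤ) ≤ ⌊|r|⌋ := Int.le_floor.mpr (by exact_mod_cast hr)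
    exact_mod_cast this
  have hle : (⌊|r|⌋ : ℝ) ≤ |r| := Int.floor_le _
  set n : ℝ := (⌊|r|⌋ : ℝ) with hn_def
  have hpos : 0 < n := by linarith
  have hmain : 2 ≤ |-2 * r / n| := by
    rw [abs_div, abs_mul, abs_of_pos hpos, le_div_iff₀ hpos]
    norm_num
    linarith
  have hsmall : |e * (n⁻¹ - -n⁻¹)| ≤ 1 := by
    rw [abs_mul, he, sub_neg_eq_add, one_mul, abs_of_pos (by positivity)]
    have : n⁻¹ ≤ 100⁻¹ := inv_anti₀ (by norm_num) hn
    linarith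
  have key : ∀ a b : ℝ, 2 ≤ |a| → |b| ≤ 1 → 1 ≤ |a + b| := by
    intro a b ha hb
    have := abs_sub_abs_le_abs_sub a (-b)
    rw [abs_neg, sub_neg_eq_add] at this
    linarith
  cases s
  · have := key _ _ (by rwa [abs_neg] : 2 ≤ |-(-2 * r / n)|) hsmall
    simpa [wMat, ← hn_def] using this
  · have := key _ _ hmain hsmall
    simpa [wMat, ← hn_def] using this

/-- For every `r` with `|r| ≥ 100` and all choices of signs `⋆, ✦ ∈ {+, −}`, the
Frobenius distance from `w_r^⋆` to the subspace `𝔙^{0✦}` is at least `0.1`. -/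
theorem frob_dist_wMat_frakV (r : ℝ) (hr : 100 ≤ |r|) (s1 s2 : Bool)
    (V : Matrix (Fin 2) (Fin 2) ℝ) (hV : V ∈ frakV s2) :
    0.1 ≤ frobNorm (wMat s1 r - V) := by
  have hV0 := frakV_functional s2 V hV
  set e : ℝ := if s2 then 1 else -1 with he
  have he1 : |e| = 1 := by cases s2 <;> simp [he]
  have hw := wMat_functional_ge r hr s1 e he1
  have hle := abs_functional_le e (by rw [← sq_abs, he1, one_pow]) (wMat s1 r - V)
  have heq : (wMat s1 r - V) 0 1 - (wMat s1 r - V) 1 0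
        + e * ((wMat s1 r - V) 0 0 - (wMat s1 r - V) 1 1)
      = wMat s1 r 0 1 - wMat s1 r 1 0 + e * (wMat s1 r 0 0 - wMat s1 r 1 1) := by
    simp only [Matrix.sub_apply]
    linear_combination -hV0
  rw [heq] at hle
  norm_num
  linarith
end

section
/- Let Λ ⊂ ℝ^l be a lattice with l ≥ 1. There exists κ > 4 such that the following holds: whenever 0 < δ < 1/2, α⃗ ∈ ℝ^l and N > 1 satisfy |ℒ(α⃗)| ≥ δ^{−κ(2l+2)}/N for every nonzero ℒ ∈ Hom(Λ,ℤ) with ‖ℒ‖ ≤ δ^{−κ(2l+2)}, then for every Lipschitz-continuous function f : ℝ^l/Λ → ℝ and every N₀ ∈ ℝ one has |(1/N) ∫_{N₀}^{N₀+N} f([t·α⃗]) dt − ∫_{ℝ^l/Λ} f([v⃗]) d[v⃗]| ≤ Lip(f) · δ. -/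
/-!
The proof is a quantitative Weyl argument with a Fejér kernel.

Since `E ⧸ Λ` is compact, `Λ` spans `E`, so it has a `ℤ`-basis `b` that is an `ℝ`-basis of `E`
(`exists_lattice_basis`). For `k ∈ ℤ^l` the functional `ℒ_k = ∑ k_i b_i^*` is integral on `Λ` and
gives a character `χ_k = exp(2πi ℒ_k)` of the torus (`latChar`); the `χ_k` with `k ≠ 0` have mean
zero. Put `F = |S|⁻¹ |∑_{p ∈ S} χ_p|²` with `S = {0, …, n-1}^l`. This is a probability density and
a trigonometric polynomial with frequencies `p - q`, where `p, q ∈ S`.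

* Concentration (`moment_le`): `∫ F (1 - Re χ_{e_i})` is the proportion of `p ∈ S` with
  `p + e_i ∉ S`, that is `1/n`. As `dist(s, ℤ) ≤ ε + (1 - cos 2πs)/(8ε)` for every `ε > 0`, one
  gets `∫ ‖z‖ F(z) ≤ (∑ ‖b_i‖)(ε + 1/(8nε))`. Hence replacing `f` by its average
  `x ↦ ∫ f(x + z) F(z)` moves it by at most `Lip(f)` times this quantity.
* Oscillation (`average_smoothing_sub_le`): the smoothed function is a finite combination of
  characters with coefficients of size at most `sup |f| / |S|` for each pair `(p, q)`. Its
  constant term is `∫ f`, and the average of `χ_k` along the line is at most `1/(N |ℒ_k(α)|)`, so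
  the error is at most `sup |f| · n^l / D`, with `D = δ^{-κ(2l+2)}` from the Diophantine condition.

Subtracting `f(0)` makes `sup |f|` at most a constant times `Lip(f)`. Taking `ε` of order `δ` and
`n` of order `δ⁻²`, both errors are at most `Lip(f) δ / 2` as soon as
`D ≥ Q δ^{-(2l+2)}` for a constant `Q` depending only on `Λ`, and `δ < 1/2` allows `κ` to be chosen
with this property (`rpow_dominates`).
-/

open MeasureTheory

/-! ### Fejér kernels for a family of characters -/

/-- `χ` is a homomorphism from `ℤ^ι` to the continuous unitary characters of `X`, and the
characters with nonzero index have `μ`-mean zero. -/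
structure CharFamily {ι X : Type*} [AddCommGroup X] [TopologicalSpace X] [MeasurableSpace X]
    (μ : Measure X) (χ : (ι → ℤ) → X → ℂ) : Prop where
  zero_index : ∀ x, χ 0 x = 1
  add_index : ∀ k m x, χ (k + m) x = χ k x * χ m x
  neg_index : ∀ k x, χ (-k) x = starRingEnd ℂ (χ k x)
  add_point : ∀ k x y, χ k (x + y) = χ k x * χ k y
  neg_point : ∀ k x, χ k (-x) = χ (-k) x
  norm_eq_one : ∀ k x, ‖χ k x‖ = 1
  cont : ∀ k, Continuous (χ k)
  integral_ne : ∀ k, k ≠ 0 → ∫ x, χ k x ∂μ = 0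

/-- The Fejér-type kernel `|S|⁻¹ |∑_{p ∈ S} χ_p|²`. -/
noncomputable def fejer {ι X : Type*} (χ : (ι → ℤ) → X → ℂ) (S : Finset (ι → ℤ)) (x : X) : ℝ :=
  (S.card : ℝ)⁻¹ * ‖∑ p ∈ S, χ p x‖ ^ 2

set_option linter.unusedSectionVars false

section Core

lemma fejer_nonneg {ι X : Type*} (χ : (ι → ℤ) → X → ℂ) (S : Finset (ι → ℤ)) (x : X) :
    0 ≤ fejer χ S x := by
  unfold fejer; positivity

variable {ι X : Type*} [SeminormedAddCommGroup X] [MeasurableSpace X] {μ : Measure X}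
  {χ : (ι → ℤ) → X → ℂ}

lemma fejer_continuous (h : CharFamily μ χ) (S : Finset (ι → ℤ)) : Continuous (fejer χ S) := by
  unfold fejer
  have := h.cont
  fun_prop

lemma fejer_eq_sum (h : CharFamily μ χ) (S : Finset (ι → ℤ)) (x : X) :
    (fejer χ S x : ℂ) = (S.card : ℂ)⁻¹ * ∑ p ∈ S, ∑ q ∈ S, χ (p - q) x := by
  unfold fejer
  push_cast
  rw [← Complex.mul_conj', map_sum, Finset.sum_mul_sum]
  simp_rw [sub_eq_add_neg, h.add_index, h.neg_index]

variable [CompactSpace X] [BorelSpace X]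

lemma integrable_of_cont {E : Type*} [NormedAddCommGroup E] [IsFiniteMeasure μ] {g : X → E}
    (hg : Continuous g) : Integrable g μ :=
  hg.integrable_of_hasCompactSupport (HasCompactSupport.of_compactSpace g)

variable [Fintype ι] [DecidableEq ι] [IsProbabilityMeasure μ]

/-- By orthogonality only the pairs `(p, q)` with `q = p + m` contribute. -/
lemma integral_fejer_mul (h : CharFamily μ χ) (S : Finset (ι → ℤ)) (m : ι → ℤ) :
    ∫ x, (fejer χ S x : ℂ) * χ m x ∂μ
      = (S.card : ℂ)⁻¹ * ((S.filter (fun p => p + m ∈ S)).card : ℂ) := by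
  have h1 : ∀ x, (fejer χ S x : ℂ) * χ m x
      = (S.card : ℂ)⁻¹ * ∑ p ∈ S, ∑ q ∈ S, χ (p - q + m) x := by
    intro x
    rw [fejer_eq_sum h, mul_assoc, Finset.sum_mul]
    simp_rw [Finset.sum_mul, h.add_index _ m]
  simp_rw [h1]
  rw [integral_const_mul, integral_finsetSum]
  · congr 1
    rw [Finset.card_filter]
    push_cast
    refine Finset.sum_congr rfl fun p _ => ?_
    rw [integral_finsetSum _ fun q _ => integrable_of_cont (h.cont _)]
    have : ∀ q ∈ S, ∫ x, χ (p - q + m) x ∂μ = if p + m = q then (1:ℂ) else 0 := by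
      intro q _
      split_ifs with hq
      · have : p - q + m = 0 := by rw [← hq]; abel
        simp [this, h.zero_index]
      · apply h.integral_ne
        intro h0; apply hq
        have : p + m - q = 0 := by rw [← h0]; abel
        exact sub_eq_zero.mp this
    rw [Finset.sum_congr rfl this, Finset.sum_ite_eq]
  · intro p _
    exact integrable_finsetSum _ fun q _ => integrable_of_cont (h.cont _)

lemma integral_fejer (h : CharFamily μ χ) (S : Finset (ι → ℤ)) (hS : S.Nonempty) :
    ∫ x, fejer χ S x ∂μ = 1 := by
  have h1 := integral_fejer_mul h S 0
  have h0 := h.zero_index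
  simp only [h0, mul_one, add_zero, Finset.filter_mem_eq_inter, Finset.inter_self] at h1
  rw [inv_mul_cancel₀ (by simpa using hS.ne_empty)] at h1
  rw [integral_complex_ofReal] at h1
  exact_mod_cast h1

lemma integral_fejer_one_sub_re (h : CharFamily μ χ) (S : Finset (ι → ℤ)) (hS : S.Nonempty)
    (m : ι → ℤ) :
    ∫ x, fejer χ S x * (1 - (χ m x).re) ∂μ
      = (S.card : ℝ)⁻¹ * ((S.filter (fun p => p + m ∉ S)).card : ℝ) := by
  have hF := fejer_continuous h S
  have hm := h.cont m
  have h1 := congrArg Complex.re (integral_fejer_mul h S m)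
  have h2 : (∫ x, (fejer χ S x : ℂ) * χ m x ∂μ).re = ∫ x, fejer χ S x * (χ m x).re ∂μ := by
    have := integral_re (𝕜 := ℂ) (μ := μ) (f := fun x => (fejer χ S x : ℂ) * χ m x)
      (integrable_of_cont (by fun_prop))
    simpa using this.symm
  have h3 : ((S.card : ℂ)⁻¹ * ((S.filter (fun p => p + m ∈ S)).card : ℂ)).re
      = (S.card : ℝ)⁻¹ * ((S.filter (fun p => p + m ∈ S)).card : ℝ) := by
    have : (S.card : ℂ)⁻¹ * ((S.filter (fun p => p + m ∈ S)).card : ℂ)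
      = (((S.card : ℝ)⁻¹ * ((S.filter (fun p => p + m ∈ S)).card : ℝ) : ℝ) : ℂ) := by push_cast; rfl
    rw [this, Complex.ofReal_re]
  rw [h2, h3] at h1
  simp_rw [mul_sub, mul_one]
  have hre : Continuous fun x => (χ m x).re := Complex.continuous_re.comp hm
  have hi : Integrable (fun x => fejer χ S x * (χ m x).re) μ := integrable_of_cont (hF.mul hre)
  rw [integral_sub (integrable_of_cont hF) hi, integral_fejer h S hS, h1]
  have h4 : ((S.filter (fun p => p + m ∈ S)).card : ℝ) + ((S.filter (fun p => p + m ∉ S)).card : ℝ)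
      = S.card := by exact_mod_cast Finset.card_filter_add_card_filter_not (s := S) (fun p => p + m ∈ S)
  have h5 : (S.card : ℝ) ≠ 0 := by simpa using hS.ne_empty
  field_simp
  linarith

/-- Averaging a Lipschitz function against the kernel moves it by at most `C` times the first
moment of the kernel. -/
lemma sub_smoothing_le (h : CharFamily μ χ) (S : Finset (ι → ℤ)) (hS : S.Nonempty)
    {C : NNReal} {f : X → ℝ} (hf : LipschitzWith C f) (x : X) :
    |f x - ∫ z, f (x + z) * fejer χ S z ∂μ| ≤ C * ∫ z, ‖z‖ * fejer χ S z ∂μ := by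
  have hF := fejer_continuous h S
  have hfc := hf.continuous
  have h1 : f x = ∫ z, f x * fejer χ S z ∂μ := by
    rw [integral_const_mul, integral_fejer h S hS, mul_one]
  rw [h1, ← integral_sub (integrable_of_cont (by fun_prop)) (integrable_of_cont (by fun_prop)),
    ← integral_const_mul, ← Real.norm_eq_abs]
  refine norm_integral_le_of_norm_le (integrable_of_cont (by fun_prop)) (ae_of_all _ fun z => ?_)
  rw [← sub_mul, norm_mul, Real.norm_of_nonneg (fejer_nonneg χ S z), ← mul_assoc]
  gcongr
  · exact fejer_nonneg χ S z
  · have := hf.dist_le_mul x (x + z)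
    simpa [Real.dist_eq, dist_eq_norm] using this

variable [μ.IsAddLeftInvariant]

/-- The smoothed function is a trigonometric polynomial. -/
lemma smoothing_eq_sum (h : CharFamily μ χ) (S : Finset (ι → ℤ))
    {f : X → ℝ} (hf : Continuous f) (x : X) :
    ((∫ z, f (x + z) * fejer χ S z ∂μ : ℝ) : ℂ)
      = (S.card : ℂ)⁻¹ * ∑ p ∈ S, ∑ q ∈ S, (∫ y, f y * χ (p - q) y ∂μ) * χ (q - p) x := by
  have h1 : ∫ z, f (x + z) * fejer χ S z ∂μ = ∫ y, f y * fejer χ S (-x + y) ∂μ := by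
    rw [← integral_add_left_eq_self (fun y => f y * fejer χ S (-x + y)) x]
    simp
  have h2 : ∀ y, ((f y * fejer χ S (-x + y) : ℝ) : ℂ)
      = (S.card : ℂ)⁻¹ * ∑ p ∈ S, ∑ q ∈ S, (f y * χ (p - q) y) * χ (q - p) x := by
    intro y
    push_cast
    rw [fejer_eq_sum h, mul_left_comm, Finset.mul_sum]
    congr 1
    refine Finset.sum_congr rfl fun p _ => ?_
    rw [Finset.mul_sum]
    refine Finset.sum_congr rfl fun q _ => ?_
    rw [h.add_point, h.neg_point, neg_sub]
    ring
  have hc : ∀ k, Continuous fun y => (f y : ℂ) * χ k y := fun k => by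
    have := h.cont k
    fun_prop
  rw [h1, ← integral_complex_ofReal]
  simp_rw [h2]
  rw [integral_const_mul, integral_finsetSum]
  · congr 1
    refine Finset.sum_congr rfl fun p _ => ?_
    rw [integral_finsetSum]
    · simp_rw [integral_mul_const]
    · intro q _
      exact (integrable_of_cont (hc _)).mul_const _
  · intro p _
    exact integrable_finsetSum _ fun q _ => (integrable_of_cont (hc _)).mul_const _

/-- Along a curve on which all nontrivial characters with frequencies in `S - S` have small
averages, the average of the smoothed function is close to `∫ f`: the diagonal terms `p = q` add
up to `∫ f`, and each of the other terms is at most `M * D / |S|`. -/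
lemma average_smoothing_sub_le (h : CharFamily μ χ) (S : Finset (ι → ℤ)) (hS : S.Nonempty)
    {f : X → ℝ} (hf : Continuous f) {M D : ℝ} (hM : ∀ x, |f x| ≤ M) (hD : 0 ≤ D)
    {γ : ℝ → X} (hγ : Continuous γ) {a N : ℝ} (hN : 0 < N)
    (hχ : ∀ p ∈ S, ∀ q ∈ S, p ≠ q → ‖(1 / N : ℂ) * ∫ t in a..(a + N), χ (p - q) (γ t)‖ ≤ D) :
    |(1 / N) * (∫ t in a..(a + N), ∫ z, f (γ t + z) * fejer χ S z ∂μ) - ∫ y, f y ∂μ|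
      ≤ M * S.card * D := by
  have hM0 : 0 ≤ M := (abs_nonneg _).trans (hM 0)
  have h0 := h.zero_index
  have hS0 : (S.card : ℂ) ≠ 0 := by simpa using hS.ne_empty
  have hS0' : (S.card : ℝ) ≠ 0 := by simpa using hS.ne_empty
  have hNC : (N : ℂ) ≠ 0 := by exact_mod_cast hN.ne'
  have hc : ∀ k, Continuous fun t => χ k (γ t) := fun k => (h.cont k).comp hγ
  set c : (ι → ℤ) → ℂ := fun k => ∫ y, f y * χ k y ∂μ with hcdef
  have hcM : ∀ k, ‖c k‖ ≤ M := by
    intro k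
    have := norm_integral_le_of_norm_le_const (μ := μ) (f := fun y => (f y : ℂ) * χ k y) (C := M)
      (ae_of_all _ fun y => by
        rw [norm_mul, h.norm_eq_one, mul_one, Complex.norm_real]; exact hM y)
    simpa using this
  set A : (ι → ℤ) → ℂ := fun k => (1 / N : ℂ) * ∫ t in a..(a + N), χ k (γ t) with hA
  have hA0 : A 0 = 1 := by
    simp [hA, h0, hNC]
  have hc0 : c 0 = ((∫ y, f y ∂μ : ℝ) : ℂ) := by
    simp only [hcdef, h0, mul_one]
    exact integral_ofReal
  have hexp : (((1 / N) * (∫ t in a..(a + N), ∫ z, f (γ t + z) * fejer χ S z ∂μ) : ℝ) : ℂ)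
      = (S.card : ℂ)⁻¹ * ∑ p ∈ S, ∑ q ∈ S, c (p - q) * A (q - p) := by
    push_cast
    rw [← intervalIntegral.integral_ofReal]
    simp_rw [smoothing_eq_sum h S hf]
    rw [intervalIntegral.integral_const_mul, intervalIntegral.integral_finsetSum, mul_left_comm,
      Finset.mul_sum]
    · congr 1
      refine Finset.sum_congr rfl fun p _ => ?_
      rw [intervalIntegral.integral_finsetSum, Finset.mul_sum]
      · refine Finset.sum_congr rfl fun q _ => ?_
        rw [intervalIntegral.integral_const_mul, mul_left_comm]
      · intro q _
        exact ((hc _).const_mul _).intervalIntegrable _ _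
    · intro p _
      exact (continuous_finsetSum _ fun q _ => (hc _).const_mul _).intervalIntegrable _ _
  have hdiff : (((1 / N) * (∫ t in a..(a + N), ∫ z, f (γ t + z) * fejer χ S z ∂μ)
      - ∫ y, f y ∂μ : ℝ) : ℂ)
      = (S.card : ℂ)⁻¹ * ∑ p ∈ S, ∑ q ∈ S, (c (p - q) * A (q - p) - if p = q then c 0 else 0) := by
    rw [Complex.ofReal_sub, hexp, ← hc0]
    simp_rw [Finset.sum_sub_distrib]
    rw [mul_sub]
    congr 1
    rw [Finset.sum_congr rfl (fun p hp => by rw [Finset.sum_ite_eq, if_pos hp] :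
      ∀ p ∈ S, (∑ q ∈ S, if p = q then c 0 else 0) = c 0)]
    rw [Finset.sum_const, nsmul_eq_mul, inv_mul_cancel_left₀ hS0]
  rw [← Real.norm_eq_abs, ← Complex.norm_real, hdiff, norm_mul, norm_inv, Complex.norm_natCast]
  have hterm : ∀ p ∈ S, ∀ q ∈ S,
      ‖c (p - q) * A (q - p) - if p = q then c 0 else 0‖ ≤ M * D := by
    intro p hp q hq
    split_ifs with hpq
    · subst hpq
      simp only [sub_self, hA0, mul_one, norm_zero]
      positivity
    · rw [sub_zero, norm_mul]
      exact mul_le_mul (hcM _) (hχ q hq p hp (Ne.symm hpq)) (norm_nonneg _) hM0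
  calc (S.card : ℝ)⁻¹ * ‖∑ p ∈ S, ∑ q ∈ S, (c (p - q) * A (q - p) - if p = q then c 0 else 0)‖
      ≤ (S.card : ℝ)⁻¹ * ∑ p ∈ S, ∑ q ∈ S, M * D := by
        gcongr
        exact norm_sum_le_of_le _ fun p hp => norm_sum_le_of_le _ fun q hq => hterm p hp q hq
    _ = M * S.card * D := by
        simp only [Finset.sum_const, nsmul_eq_mul]
        field_simp

/-- The smoothing error and the oscillation error combined. -/
lemma average_sub_le (h : CharFamily μ χ) (S : Finset (ι → ℤ)) (hS : S.Nonempty)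
    {C : NNReal} {f : X → ℝ} (hf : LipschitzWith C f)
    {M D η : ℝ} (hM : ∀ x, |f x| ≤ M) (hD : 0 ≤ D)
    {γ : ℝ → X} (hγ : Continuous γ) {a N : ℝ} (hN : 0 < N)
    (hχ : ∀ p ∈ S, ∀ q ∈ S, p ≠ q → ‖(1 / N : ℂ) * ∫ t in a..(a + N), χ (p - q) (γ t)‖ ≤ D)
    (hη : ∫ z, ‖z‖ * fejer χ S z ∂μ ≤ η) :
    |(1 / N) * (∫ t in a..(a + N), f (γ t)) - ∫ y, f y ∂μ| ≤ C * η + M * S.card * D := by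
  have hPc : Continuous fun x => ∫ z, f (x + z) * fejer χ S z ∂μ := by
    have h1 : Continuous fun x => (((∫ z, f (x + z) * fejer χ S z ∂μ : ℝ) : ℂ)).re := by
      simp_rw [smoothing_eq_sum h S hf.continuous]
      refine Complex.continuous_re.comp (continuous_const.mul ?_)
      exact continuous_finsetSum _ fun p _ => continuous_finsetSum _ fun q _ =>
        (h.cont _).const_mul _
    simpa only [Complex.ofReal_re] using h1
  have h1 := average_smoothing_sub_le h S hS hf.continuous hM hD hγ hN hχ
  have h2 : |(1 / N) * (∫ t in a..(a + N), f (γ t))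
      - (1 / N) * (∫ t in a..(a + N), ∫ z, f (γ t + z) * fejer χ S z ∂μ)| ≤ C * η := by
    have hi1 : IntervalIntegrable (fun t => f (γ t)) volume a (a + N) :=
      (hf.continuous.comp hγ).intervalIntegrable _ _
    have hi2 : IntervalIntegrable (fun t => ∫ z, f (γ t + z) * fejer χ S z ∂μ) volume a (a + N) :=
      (hPc.comp hγ).intervalIntegrable _ _
    rw [← mul_sub, ← intervalIntegral.integral_sub hi1 hi2, abs_mul,
      abs_of_pos (by positivity : 0 < 1 / N)]
    have h3 := intervalIntegral.norm_integral_le_of_norm_le_const (a := a) (b := a + N) (C := C * η)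
      (f := fun t => f (γ t) - ∫ z, f (γ t + z) * fejer χ S z ∂μ)
      (fun t _ => (sub_smoothing_le h S hS hf (γ t)).trans (by gcongr))
    rw [add_sub_cancel_left, abs_of_pos hN, Real.norm_eq_abs] at h3
    calc _ ≤ 1 / N * (C * η * N) := by gcongr
      _ = C * η := by field_simp
  have := abs_sub_le ((1 / N) * (∫ t in a..(a + N), f (γ t)))
    ((1 / N) * (∫ t in a..(a + N), ∫ z, f (γ t + z) * fejer χ S z ∂μ)) (∫ y, f y ∂μ)
  linarith

/-- The cube `{0, …, n - 1}^ι` of frequencies. -/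
noncomputable def box (ι : Type*) [Fintype ι] [DecidableEq ι] (n : ℕ) : Finset (ι → ℤ) :=
  Fintype.piFinset fun _ => Finset.Ico (0 : ℤ) n

lemma card_box (n : ℕ) : (box ι n).card = n ^ Fintype.card ι := by
  simp [box]

lemma box_nonempty {n : ℕ} (hn : 0 < n) : (box ι n).Nonempty := by
  rw [← Finset.card_pos, card_box]; positivity

/-- The points of the cube that leave it under translation by `e_i` lie on the face
`p i = n - 1`, so they make up at most a proportion `1 / n` of it. -/
lemma box_boundary_card (n : ℕ) (i : ι) :
    n * ((box ι n).filter (fun p => p + Pi.single i 1 ∉ box ι n)).card ≤ (box ι n).card := by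
  have hsub : (box ι n).filter (fun p => p + Pi.single i 1 ∉ box ι n)
      ⊆ Fintype.piFinset fun j => if j = i then {(n : ℤ) - 1} else Finset.Ico (0 : ℤ) n := by
    intro p hp
    simp only [box, Finset.mem_filter, Fintype.mem_piFinset, Finset.mem_Ico, not_forall] at hp
    obtain ⟨hp, j, hj⟩ := hp
    rw [Fintype.mem_piFinset]
    by_cases hji : j = i
    · subst hji
      intro m
      split_ifs with hm
      · subst hm
        have := hp m
        simp only [Pi.add_apply, Pi.single_eq_same] at hj
        rw [Finset.mem_singleton]
        omega
      · exact Finset.mem_Ico.mpr (hp m)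
    · simp only [Pi.add_apply, Pi.single_eq_of_ne hji, add_zero] at hj
      exact absurd (hp j) hj
  refine (Nat.mul_le_mul_left n (Finset.card_le_card hsub)).trans ?_
  rw [Fintype.card_piFinset, card_box, ← Finset.mul_prod_erase _ _ (Finset.mem_univ i)]
  rw [Finset.prod_congr rfl (g := fun _ => n)]
  · simp only [if_true, Finset.card_singleton, one_mul, Finset.prod_const]
    rw [Finset.card_erase_of_mem (Finset.mem_univ i), Finset.card_univ, ← pow_succ']
    have : 0 < Fintype.card ι := Fintype.card_pos_iff.mpr ⟨i⟩
    rw [Nat.sub_add_cancel this]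
  · intro j hj
    rw [if_neg (Finset.ne_of_mem_erase hj)]
    simp

/-- First moment of the Fejér kernel of the cube, on a group whose norm is controlled by the
coordinate characters. -/
lemma moment_le (h : CharFamily μ χ) {n : ℕ} (hn : 0 < n) {w : ι → ℝ} (hw : ∀ i, 0 ≤ w i)
    {ε : ℝ} (hε : 0 < ε)
    (hnorm : ∀ z : X, ‖z‖ ≤ ∑ i, w i * (ε + (1 - (χ (Pi.single i 1) z).re) / (8 * ε))) :
    ∫ z, ‖z‖ * fejer χ (box ι n) z ∂μ ≤ (∑ i, w i) * (ε + 1 / (8 * n * ε)) := by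
  have hn' : (0 : ℝ) < n := by exact_mod_cast hn
  have hF := fejer_continuous h (box ι n)
  have hre : ∀ i : ι, Continuous fun x => (χ (Pi.single i 1) x).re :=
    fun i => Complex.continuous_re.comp (h.cont _)
  have hcard : (0 : ℝ) < (box ι n).card := by exact_mod_cast (box_nonempty hn).card_pos
  have hi : ∀ i : ι, Integrable (fun z => w i * (ε * fejer χ (box ι n) z
        + (8 * ε)⁻¹ * (fejer χ (box ι n) z * (1 - (χ (Pi.single i 1) z).re)))) μ := by
    intro i
    have := hre i
    exact integrable_of_cont (by fun_prop)
  calc ∫ z, ‖z‖ * fejer χ (box ι n) z ∂μ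
      ≤ ∫ z, ∑ i, w i * (ε * fejer χ (box ι n) z
        + (8 * ε)⁻¹ * (fejer χ (box ι n) z * (1 - (χ (Pi.single i 1) z).re))) ∂μ := by
        refine integral_mono (integrable_of_cont (by fun_prop))
          (integrable_finsetSum _ fun i _ => hi i) fun z => ?_
        refine (mul_le_mul_of_nonneg_right (hnorm z) (fejer_nonneg χ _ z)).trans_eq ?_
        rw [Finset.sum_mul]
        refine Finset.sum_congr rfl fun i _ => ?_
        field_simp
    _ = ∑ i, w i * (ε + (8 * ε)⁻¹ * ∫ z, fejer χ (box ι n) z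
          * (1 - (χ (Pi.single i 1) z).re) ∂μ) := by
        rw [integral_finsetSum _ fun i _ => hi i]
        refine Finset.sum_congr rfl fun i _ => ?_
        have := hre i
        rw [integral_const_mul, integral_add (integrable_of_cont (by fun_prop))
          (integrable_of_cont (by fun_prop)), integral_const_mul, integral_const_mul,
          integral_fejer h _ (box_nonempty hn), mul_one]
    _ ≤ ∑ i, w i * (ε + 1 / (8 * n * ε)) := by
        refine Finset.sum_le_sum fun i _ => mul_le_mul_of_nonneg_left ?_ (hw i)
        rw [integral_fejer_one_sub_re h _ (box_nonempty hn)]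
        have hb : (n : ℝ) * ((box ι n).filter (fun p => p + Pi.single i 1 ∉ box ι n)).card
            ≤ (box ι n).card := by exact_mod_cast box_boundary_card n i
        have : ((box ι n).card : ℝ)⁻¹
            * ((box ι n).filter (fun p => p + Pi.single i 1 ∉ box ι n)).card ≤ 1 / n := by
          rw [inv_mul_le_iff₀ hcard, mul_one_div, le_div_iff₀ hn', mul_comm]
          exact hb
        calc _ ≤ ε + (8 * ε)⁻¹ * (1 / n) := by gcongr
          _ = _ := by field_simp
    _ = _ := by rw [Finset.sum_mul]

end Core

/-! ### Lattices and their characters -/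

section Lattice

variable {E : Type*} [NormedAddCommGroup E] [NormedSpace ℝ E] [FiniteDimensional ℝ E]

/-- Otherwise a nonzero functional vanishing on `Λ` would be an unbounded continuous function on
the compact quotient. -/
lemma span_eq_top_of_compact (Λ : AddSubgroup E)
    (hc : IsCompact (Set.univ : Set (E ⧸ Λ))) : Submodule.span ℝ (Λ : Set E) = ⊤ := by
  by_contra hne
  obtain ⟨φ, hφ0, hφ⟩ := Submodule.exists_le_ker_of_lt_top _ (lt_top_iff_ne_top.mpr hne)
  have hle : Λ ≤ φ.toAddMonoidHom.ker := fun v hv => hφ (Submodule.subset_span hv)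
  have hcont : Continuous (QuotientAddGroup.lift Λ φ.toAddMonoidHom hle) := by
    rw [(QuotientAddGroup.isQuotientMap_mk Λ).continuous_iff]
    exact φ.continuous_of_finiteDimensional
  obtain ⟨M, hM⟩ := (hc.image hcont).isBounded.exists_norm_le
  obtain ⟨v, hv⟩ : ∃ v, φ v ≠ 0 := by
    by_contra! h
    exact hφ0 (LinearMap.ext h)
  have h1 := hM _ ⟨QuotientAddGroup.mk (((|M| + 1) / φ v) • v), trivial, rfl⟩
  have h2 : QuotientAddGroup.lift Λ φ.toAddMonoidHom hle
      (QuotientAddGroup.mk (((|M| + 1) / φ v) • v)) = |M| + 1 := by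
    change φ (((|M| + 1) / φ v) • v) = |M| + 1
    rw [map_smul, smul_eq_mul]
    field_simp
  rw [h2, Real.norm_of_nonneg (by positivity)] at h1
  linarith [le_abs_self M]

lemma exists_lattice_basis (Λ : AddSubgroup E) (hd : DiscreteTopology Λ)
    (hc : IsCompact (Set.univ : Set (E ⧸ Λ))) :
    ∃ b : Module.Basis (Fin (Module.finrank ℝ E)) ℝ E,
      ∀ v, v ∈ Λ ↔ ∀ i, ∃ n : ℤ, b.repr v i = n := by
  let L : Submodule ℤ E := AddSubgroup.toIntSubmodule Λ
  have : DiscreteTopology L := hd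
  have : IsZLattice ℝ L := ⟨span_eq_top_of_compact Λ hc⟩
  have := ZLattice.module_finite ℝ L
  have := ZLattice.module_free ℝ L
  let b0 := Module.finBasisOfFinrankEq ℤ L (ZLattice.rank ℝ L)
  refine ⟨b0.ofZLatticeBasis ℝ L, fun v => ?_⟩
  have h1 : v ∈ Λ ↔ v ∈ Submodule.span ℤ (Set.range (b0.ofZLatticeBasis ℝ L)) := by
    rw [Module.Basis.ofZLatticeBasis_span]; rfl
  rw [h1, Module.Basis.mem_span_iff_repr_mem]
  simp [Set.mem_range, eq_comm]

variable {ι : Type*} [Fintype ι]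

/-- The functional `∑ i, k i • b.coord i`; for `k` integral these are the elements of
`Hom(Λ, ℤ)` when `b` is a `ℤ`-basis of `Λ`. -/
noncomputable def freq (b : Module.Basis ι ℝ E) (k : ι → ℤ) : E →L[ℝ] ℝ :=
  ∑ i, (k i : ℝ) • LinearMap.toContinuousLinearMap (b.coord i)

lemma freq_apply (b : Module.Basis ι ℝ E) (k : ι → ℤ) (v : E) :
    freq b k v = ∑ i, (k i : ℝ) * b.repr v i := by
  simp [freq]

lemma freq_basis (b : Module.Basis ι ℝ E) (k : ι → ℤ) (i : ι) : freq b k (b i) = k i := by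
  classical
  simp [freq_apply, Finsupp.single_apply]

lemma norm_freq_le (b : Module.Basis ι ℝ E) (k : ι → ℤ) {n : ℝ} (hk : ∀ i, |(k i : ℝ)| ≤ n) :
    ‖freq b k‖ ≤ n * ∑ i, ‖LinearMap.toContinuousLinearMap (b.coord i)‖ := by
  rw [Finset.mul_sum]
  refine norm_sum_le_of_le _ fun i _ => ?_
  rw [norm_smul, Real.norm_eq_abs]
  gcongr
  exact hk i

/-- The character of `E ⧸ Λ` induced by `v ↦ exp (2πi · freq b k v)`, evaluated on an arbitrary
representative. -/
noncomputable def latChar (b : Module.Basis ι ℝ E) (Λ : AddSubgroup E) (k : ι → ℤ) (x : E ⧸ Λ) :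
    ℂ :=
  Complex.exp (2 * Real.pi * Complex.I * (freq b k x.out : ℝ))

lemma freq_int {b : Module.Basis ι ℝ E} {Λ : AddSubgroup E}
    (hb : ∀ v, v ∈ Λ ↔ ∀ i, ∃ n : ℤ, b.repr v i = n) (k : ι → ℤ) :
    ∀ v ∈ Λ, ∃ n : ℤ, freq b k v = n := by
  intro v hv
  choose m hm using (hb v).mp hv
  refine ⟨∑ i, k i * m i, ?_⟩
  rw [freq_apply]
  push_cast
  simp_rw [hm]

lemma latChar_mk {b : Module.Basis ι ℝ E} {Λ : AddSubgroup E}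
    (hb : ∀ v, v ∈ Λ ↔ ∀ i, ∃ n : ℤ, b.repr v i = n) (k : ι → ℤ) (v : E) :
    latChar b Λ k (QuotientAddGroup.mk v)
      = Complex.exp (2 * Real.pi * Complex.I * (freq b k v : ℝ)) := by
  have h1 : (QuotientAddGroup.mk v : E ⧸ Λ) = QuotientAddGroup.mk
      (QuotientAddGroup.mk v : E ⧸ Λ).out := (Quotient.out_eq _).symm
  obtain ⟨n, hn⟩ := freq_int hb k _ (QuotientAddGroup.eq.mp h1)
  rw [map_add, map_neg] at hn
  have h2 : freq b k (QuotientAddGroup.mk v : E ⧸ Λ).out = freq b k v + n := by linarith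
  unfold latChar
  rw [h2, Complex.exp_eq_exp_iff_exists_int]
  exact ⟨n, by push_cast; ring⟩

lemma latChar_charFamily [MeasurableSpace E] [BorelSpace E] {b : Module.Basis ι ℝ E}
    {Λ : AddSubgroup E} [BorelSpace (E ⧸ Λ)]
    (hb : ∀ v, v ∈ Λ ↔ ∀ i, ∃ n : ℤ, b.repr v i = n)
    (μ : Measure (E ⧸ Λ)) [μ.IsAddLeftInvariant] :
    CharFamily μ (latChar b Λ) := by
  have hadd : ∀ k x y, latChar b Λ k (x + y) = latChar b Λ k x * latChar b Λ k y := by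
    intro k x y
    induction x using QuotientAddGroup.induction_on with | H v => ?_
    induction y using QuotientAddGroup.induction_on with | H w => ?_
    rw [← QuotientAddGroup.mk_add, latChar_mk hb, latChar_mk hb, latChar_mk hb, ← Complex.exp_add,
      map_add]
    congr 1
    push_cast
    ring
  have hfneg : ∀ k v, freq b (-k) v = -freq b k v := by
    intro k v
    simp [freq_apply]
  refine ⟨?_, ?_, ?_, hadd, ?_, ?_, ?_, ?_⟩
  · intro x
    simp [latChar, freq_apply]
  · intro k m x
    simp only [latChar]
    rw [← Complex.exp_add]
    congr 1
    have : freq b (k + m) x.out = freq b k x.out + freq b m x.out := by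
      simp [freq_apply, add_mul, Finset.sum_add_distrib]
    rw [this]
    push_cast
    ring
  · intro k x
    simp only [latChar]
    rw [← Complex.exp_conj, hfneg]
    congr 1
    simp [Complex.conj_ofNat]
  · intro k x
    induction x using QuotientAddGroup.induction_on with | H v => ?_
    rw [← QuotientAddGroup.mk_neg, latChar_mk hb, latChar_mk hb, hfneg, map_neg]
  · intro k x
    simp only [latChar]
    have : (2 * Real.pi * Complex.I * (freq b k x.out : ℝ) : ℂ)
      = ((2 * Real.pi * freq b k x.out : ℝ) : ℂ) * Complex.I := by push_cast; ring
    rw [this, Complex.norm_exp_ofReal_mul_I]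
  · intro k
    refine (QuotientAddGroup.isQuotientMap_mk Λ).continuous_iff.mpr ?_
    have : latChar b Λ k ∘ QuotientAddGroup.mk
        = fun v => Complex.exp (2 * Real.pi * Complex.I * (freq b k v : ℝ)) :=
      funext fun v => latChar_mk hb k v
    rw [this]
    fun_prop
  · intro k hk
    obtain ⟨i, hi⟩ : ∃ i, k i ≠ 0 := by
      by_contra! h0
      exact hk (funext h0)
    have hi' : (k i : ℝ) ≠ 0 := by exact_mod_cast hi
    -- Translation by the half-period `b i / (2 k i)` changes the sign of the character.
    have ha : latChar b Λ k (QuotientAddGroup.mk ((1 / (2 * (k i : ℝ))) • b i)) = -1 := by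
      rw [latChar_mk hb, map_smul, freq_basis, smul_eq_mul]
      have : (1 / (2 * (k i : ℝ))) * k i = 1 / 2 := by field_simp
      rw [this, ← Complex.exp_pi_mul_I]
      congr 1
      push_cast
      ring
    have h1 := integral_add_left_eq_self (μ := μ) (latChar b Λ k)
      (QuotientAddGroup.mk ((1 / (2 * (k i : ℝ))) • b i))
    simp_rw [hadd, ha] at h1
    rw [integral_const_mul] at h1
    linear_combination (-1 / 2 : ℂ) * h1

lemma norm_quotient_le {b : Module.Basis ι ℝ E} {Λ : AddSubgroup E}
    (hb : ∀ v, v ∈ Λ ↔ ∀ i, ∃ n : ℤ, b.repr v i = n) (v : E) :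
    ‖(QuotientAddGroup.mk v : E ⧸ Λ)‖ ≤ ∑ i, ‖b i‖ * |b.repr v i - round (b.repr v i)| := by
  classical
  set u : E := ∑ i, (b.repr v i - round (b.repr v i)) • b i with hu
  have h1 : (QuotientAddGroup.mk v : E ⧸ Λ) = QuotientAddGroup.mk u := by
    rw [QuotientAddGroup.eq, hb]
    intro i
    refine ⟨-round (b.repr v i), ?_⟩
    have : b.repr u i = b.repr v i - round (b.repr v i) := by
      rw [hu, Module.Basis.repr_sum_self]
    rw [map_add, map_neg, Finsupp.add_apply, Finsupp.neg_apply, this]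
    push_cast
    ring
  rw [h1]
  refine (QuotientAddGroup.norm_mk_le_norm).trans (norm_sum_le_of_le _ fun i _ => ?_)
  rw [norm_smul, Real.norm_eq_abs, mul_comm]

/-- Combines `|s| ≤ ε + s² / ε` with `1 - cos 2πs ≥ 8 s²` for the distance `|s| ≤ 1/2` of each
coordinate to the nearest integer. -/
lemma norm_le_chars [DecidableEq ι] {b : Module.Basis ι ℝ E} {Λ : AddSubgroup E}
    (hb : ∀ v, v ∈ Λ ↔ ∀ i, ∃ n : ℤ, b.repr v i = n) {ε : ℝ} (hε : 0 < ε) (z : E ⧸ Λ) :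
    ‖z‖ ≤ ∑ i, ‖b i‖ * (ε + (1 - (latChar b Λ (Pi.single i 1) z).re) / (8 * ε)) := by
  induction z using QuotientAddGroup.induction_on with | H v => ?_
  refine (norm_quotient_le hb v).trans (Finset.sum_le_sum fun i _ => ?_)
  refine mul_le_mul_of_nonneg_left ?_ (norm_nonneg _)
  set s := b.repr v i - round (b.repr v i) with hs
  have hs2 : |s| ≤ 1 / 2 := abs_sub_round _
  have hf : freq b (Pi.single i 1) v = b.repr v i := by
    rw [freq_apply, Finset.sum_eq_single i]
    · simp
    · intro j _ hj
      simp [Pi.single_eq_of_ne hj]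
    · simp
  have hre : (latChar b Λ (Pi.single i 1) (QuotientAddGroup.mk v)).re
      = Real.cos (2 * Real.pi * s) := by
    rw [latChar_mk hb, hf]
    have h1 : (2 * Real.pi * Complex.I * ((b.repr v i : ℝ) : ℂ))
      = ((2 * Real.pi * b.repr v i : ℝ) : ℂ) * Complex.I := by push_cast; ring
    rw [h1, Complex.exp_ofReal_mul_I_re]
    have h2 : 2 * Real.pi * b.repr v i
        = 2 * Real.pi * s + (round (b.repr v i) : ℤ) * (2 * Real.pi) := by rw [hs]; ring
    rw [h2, Real.cos_add_int_mul_two_pi]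
  rw [hre]
  have hcos : Real.cos (2 * Real.pi * s) ≤ 1 - 8 * s ^ 2 := by
    have hpi := Real.pi_pos
    have h3 := Real.cos_le_one_sub_mul_cos_sq (x := 2 * Real.pi * s) (by
      rw [abs_mul, abs_of_pos (by positivity)]; nlinarith)
    have h4 : 2 / Real.pi ^ 2 * (2 * Real.pi * s) ^ 2 = 8 * s ^ 2 := by field_simp; ring
    linarith
  have h5 : |s| ≤ ε + s ^ 2 / ε := by
    have h6 : |s| * ε ≤ ε * ε + s ^ 2 := by
      rw [← sq_abs s]
      nlinarith [sq_nonneg (|s| - ε), abs_nonneg s]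
    have h7 : ε + s ^ 2 / ε = (ε * ε + s ^ 2) / ε := by field_simp
    rw [h7, le_div_iff₀ hε]
    exact h6
  have h8 : s ^ 2 / ε ≤ (1 - Real.cos (2 * Real.pi * s)) / (8 * ε) := by
    rw [div_le_div_iff₀ hε (by positivity)]
    nlinarith
  linarith

lemma norm_quotient_le_sum {b : Module.Basis ι ℝ E} {Λ : AddSubgroup E}
    (hb : ∀ v, v ∈ Λ ↔ ∀ i, ∃ n : ℤ, b.repr v i = n) (z : E ⧸ Λ) : ‖z‖ ≤ ∑ i, ‖b i‖ := by
  induction z using QuotientAddGroup.induction_on with | H v => ?_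
  refine (norm_quotient_le hb v).trans (Finset.sum_le_sum fun i _ => ?_)
  have := abs_sub_round (b.repr v i)
  exact mul_le_of_le_one_right (norm_nonneg _) (by linarith)

lemma norm_average_latChar_le {b : Module.Basis ι ℝ E} {Λ : AddSubgroup E}
    (hb : ∀ v, v ∈ Λ ↔ ∀ i, ∃ n : ℤ, b.repr v i = n) (k : ι → ℤ) {α : E} {a N D : ℝ}
    (hN : 0 < N) (hD : 0 < D) (hk : D / N ≤ |freq b k α|) :
    ‖(1 / N : ℂ) * ∫ t in a..(a + N), latChar b Λ k (QuotientAddGroup.mk (t • α))‖ ≤ 1 / D := by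
  set s := freq b k α with hs
  have hspos : 0 < |s| := lt_of_lt_of_le (by positivity) hk
  have hs0 : s ≠ 0 := abs_pos.mp hspos
  set c : ℂ := ((2 * Real.pi * s : ℝ) : ℂ) * Complex.I with hc
  have hpi := Real.pi_gt_three
  have hcn : ‖c‖ = 2 * Real.pi * |s| := by
    rw [hc, norm_mul, Complex.norm_I, mul_one, Complex.norm_real, Real.norm_eq_abs, abs_mul,
      abs_of_pos (by positivity)]
  have hc0 : c ≠ 0 := by
    rw [← norm_pos_iff, hcn]; positivity
  have h1 : ∀ t : ℝ, latChar b Λ k (QuotientAddGroup.mk (t • α)) = Complex.exp (c * t) := by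
    intro t
    rw [latChar_mk hb, map_smul, smul_eq_mul, hc]
    congr 1
    push_cast
    ring
  have hexp : ∀ t : ℝ, ‖Complex.exp (c * t)‖ = 1 := by
    intro t
    have : c * t = ((2 * Real.pi * s * t : ℝ) : ℂ) * Complex.I := by rw [hc]; push_cast; ring
    rw [this, Complex.norm_exp_ofReal_mul_I]
  simp_rw [h1]
  rw [integral_exp_mul_complex hc0, norm_mul, norm_div, norm_div, norm_one, Complex.norm_real,
    Real.norm_of_nonneg hN.le, hcn]
  have h2 : ‖Complex.exp (c * (a + N : ℝ)) - Complex.exp (c * a)‖ ≤ 2 := by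
    refine (norm_sub_le _ _).trans ?_
    rw [hexp, hexp]
    norm_num
  have h3 : D ≤ N * |s| := by
    rw [div_le_iff₀ hN] at hk; linarith
  calc 1 / N * (‖Complex.exp (c * (a + N : ℝ)) - Complex.exp (c * a)‖ / (2 * Real.pi * |s|))
      ≤ 1 / N * (2 / (2 * Real.pi * |s|)) := by gcongr
    _ = 1 / (Real.pi * (N * |s|)) := by field_simp
    _ ≤ 1 / D := by
        apply one_div_le_one_div_of_le hD
        nlinarith

end Lattice

/-! ### Choice of constants and conclusion -/

/-- Any constant multiple of `δ^{-(2l+2)}` is dominated by `δ^{-κ(2l+2)}` for large `κ`, uniformly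
in `0 < δ < 1/2`. -/
lemma rpow_dominates (l : ℕ) (Q : ℝ) : ∃ κ : ℝ, 4 < κ ∧ ∀ δ : ℝ, 0 < δ → δ < 1 / 2 →
    Q * (δ⁻¹) ^ (2 * l + 2) ≤ δ ^ (-(κ * (2 * (l : ℝ) + 2))) := by
  obtain ⟨m, hm⟩ := pow_unbounded_of_one_lt Q (one_lt_two)
  refine ⟨5 + m, by have : (0 : ℝ) ≤ m := Nat.cast_nonneg m
                    linarith, fun δ h0 h1 => ?_⟩
  have h2 : (2 : ℝ) ≤ δ⁻¹ := by
    rw [le_inv_comm₀ (by norm_num) h0]; linarith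
  have h3 : δ ^ (-((5 + (m : ℝ)) * (2 * (l : ℝ) + 2)))
      = (δ⁻¹) ^ ((5 + m) * (2 * l + 2)) := by
    rw [Real.rpow_neg h0.le, ← Real.inv_rpow h0.le, ← Real.rpow_natCast]
    push_cast
    rfl
  rw [h3]
  have h4 : (5 + m) * (2 * l + 2) = (4 + m) * (2 * l + 2) + (2 * l + 2) := by ring
  rw [h4, pow_add _ ((4 + m) * (2 * l + 2))]
  refine mul_le_mul_of_nonneg_right ?_ (by positivity)
  calc Q ≤ 2 ^ m := hm.le
    _ ≤ (δ⁻¹) ^ m := by gcongr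
    _ ≤ (δ⁻¹) ^ ((4 + m) * (2 * l + 2)) := by
        apply pow_le_pow_right₀ (by linarith)
        nlinarith

/-- Effective equidistribution of lines on tori (Lemma B.1): for a lattice `Λ ⊂ ℝ^l`
there is `κ > 4` such that whenever `0 < δ < 1/2`, `α ∈ ℝ^l`, `N > 1` satisfy the
Diophantine condition `|ℒ(α)| ≥ δ^{−κ(2l+2)}/N` for all nonzero `ℒ ∈ Hom(Λ,ℤ)`
(viewed as linear functionals via ℝ-linear extension) of norm `≤ δ^{−κ(2l+2)}`, then
for every Lipschitz `f : ℝ^l/Λ → ℝ` and every `N₀ ∈ ℝ`,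
`|(1/N)∫_{N₀}^{N₀+N} f([tα]) dt − ∫ f dμ| ≤ Lip(f)·δ`, where `μ` is the Haar
probability measure on `ℝ^l/Λ`. -/
theorem effective_equidistribution_lines_on_tori
    (l : ℕ) (hl : 1 ≤ l)
    (Λ : AddSubgroup (EuclideanSpace ℝ (Fin l)))
    (hdisc : DiscreteTopology Λ)
    (hcocompact : IsCompact (Set.univ : Set (EuclideanSpace ℝ (Fin l) ⧸ Λ)))
    (μ : Measure (EuclideanSpace ℝ (Fin l) ⧸ Λ))
    [IsProbabilityMeasure μ] [μ.IsAddLeftInvariant] :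
    ∃ κ : ℝ, 4 < κ ∧
      ∀ (δ : ℝ) (α : EuclideanSpace ℝ (Fin l)) (N : ℝ),
        0 < δ → δ < 1 / 2 → 1 < N →
        (∀ L : EuclideanSpace ℝ (Fin l) →L[ℝ] ℝ, L ≠ 0 →
          (∀ v ∈ Λ, ∃ n : ℤ, L v = n) →
          ‖L‖ ≤ δ ^ (-(κ * (2 * (l : ℝ) + 2))) →
          δ ^ (-(κ * (2 * (l : ℝ) + 2))) / N ≤ |L α|) →
        ∀ (C : NNReal) (f : EuclideanSpace ℝ (Fin l) ⧸ Λ → ℝ), LipschitzWith C f →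
        ∀ N₀ : ℝ,
          |(1 / N) * (∫ t in N₀..(N₀ + N), f (QuotientAddGroup.mk (t • α)))
              - ∫ v, f v ∂μ| ≤ (C : ℝ) * δ := by
  obtain ⟨b, hb⟩ := exists_lattice_basis Λ hdisc hcocompact
  have : IsClosed (Λ : Set (EuclideanSpace ℝ (Fin l))) := AddSubgroup.isClosed_of_discrete
  have : CompactSpace (EuclideanSpace ℝ (Fin l) ⧸ Λ) := ⟨hcocompact⟩
  have hχ := latChar_charFamily hb μ
  set W : ℝ := 1 + ∑ i, ‖b i‖ with hW
  set B : ℝ := ∑ i, ‖LinearMap.toContinuousLinearMap (b.coord i)‖ with hB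
  have hsum0 : 0 ≤ ∑ i, ‖b i‖ := Finset.sum_nonneg fun i _ => norm_nonneg _
  have hW1 : 1 ≤ W := by linarith
  have hB0 : 0 ≤ B := Finset.sum_nonneg fun i _ => norm_nonneg _
  set K : ℝ := 2 * W ^ 2 + 1 with hK
  have hK0 : 0 < K := by positivity
  obtain ⟨κ, hκ, hdom⟩ := rpow_dominates l (2 * W * K ^ l + B * K)
  refine ⟨κ, hκ, fun δ α N hδ0 hδ2 hN hdio C f hf N₀ => ?_⟩
  have hdom := hdom δ hδ0 hδ2
  set D : ℝ := δ ^ (-(κ * (2 * (l : ℝ) + 2))) with hDdef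
  have hD0 : 0 < D := Real.rpow_pos_of_pos hδ0 _
  have hN0 : 0 < N := by linarith
  have hδi : 1 ≤ δ⁻¹ := (one_le_inv₀ hδ0).mpr (by linarith)
  have hDB : B * K * (δ⁻¹) ^ 2 ≤ D := by
    have h1 : (δ⁻¹) ^ 2 ≤ (δ⁻¹) ^ (2 * l + 2) := pow_le_pow_right₀ hδi (by omega)
    have h2 : B * K * (δ⁻¹) ^ 2 ≤ B * K * (δ⁻¹) ^ (2 * l + 2) := by gcongr
    have h3 : 0 ≤ 2 * W * K ^ l * (δ⁻¹) ^ (2 * l + 2) := by positivity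
    linarith
  have hDW : 2 * W * K ^ l * (δ⁻¹) ^ (2 * l + 1) ≤ D := by
    have h1 : (δ⁻¹) ^ (2 * l + 1) ≤ (δ⁻¹) ^ (2 * l + 2) := pow_le_pow_right₀ hδi (by omega)
    have h2 : 2 * W * K ^ l * (δ⁻¹) ^ (2 * l + 1) ≤ 2 * W * K ^ l * (δ⁻¹) ^ (2 * l + 2) := by
      gcongr
    have h3 : 0 ≤ B * K * (δ⁻¹) ^ (2 * l + 2) := by positivity
    linarith
  set n : ℕ := ⌈2 * W ^ 2 / δ ^ 2⌉₊ with hn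
  have hnlow : 2 * W ^ 2 / δ ^ 2 ≤ n := Nat.le_ceil _
  have hnpos : (0 : ℝ) < n := lt_of_lt_of_le (by positivity) hnlow
  have hn0 : 0 < n := by exact_mod_cast hnpos
  have hnup : (n : ℝ) ≤ K * (δ⁻¹) ^ 2 := by
    have h1 := (Nat.ceil_lt_add_one (show 0 ≤ 2 * W ^ 2 / δ ^ 2 by positivity)).le
    have h2 : 1 ≤ (δ⁻¹) ^ 2 := one_le_pow₀ hδi
    have h3 : 2 * W ^ 2 / δ ^ 2 = 2 * W ^ 2 * (δ⁻¹) ^ 2 := by rw [inv_pow]; rfl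
    rw [← hn, h3] at h1
    rw [hK]
    linarith
  -- With this `ε` the moment bound reads `δ / 4 + W² / (2 δ n)`, and `n ≥ 2 W² / δ²` makes the
  -- second term at most `δ / 4`.
  set ε : ℝ := δ / (4 * W) with hε
  have hε0 : 0 < ε := by positivity
  have hη : ∫ z, ‖z‖ * fejer (latChar b Λ) (box _ n) z ∂μ ≤ δ / 2 := by
    refine (moment_le hχ hn0 (fun i => norm_nonneg (b i)) hε0 (norm_le_chars hb hε0)).trans ?_
    have h1 : (∑ i, ‖b i‖) * (ε + 1 / (8 * n * ε)) ≤ W * (ε + 1 / (8 * n * ε)) := by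
      gcongr
      linarith
    have h2 : W * (ε + 1 / (8 * n * ε)) = δ / 4 + W ^ 2 / (2 * δ * n) := by
      rw [hε]; field_simp; ring
    have h3 : W ^ 2 / (2 * δ * n) ≤ δ / 4 := by
      rw [div_le_iff₀ (by positivity)] at hnlow ⊢
      nlinarith
    linarith
  have hav : ∀ p ∈ box (Fin (Module.finrank ℝ (EuclideanSpace ℝ (Fin l)))) n,
      ∀ q ∈ box (Fin (Module.finrank ℝ (EuclideanSpace ℝ (Fin l)))) n, p ≠ q →
      ‖(1 / N : ℂ) * ∫ t in N₀..(N₀ + N), latChar b Λ (p - q) (QuotientAddGroup.mk (t • α))‖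
        ≤ 1 / D := by
    intro p hp q hq hpq
    refine norm_average_latChar_le hb (p - q) hN0 hD0 ?_
    refine hdio _ ?_ (freq_int hb _) ?_
    · intro h0
      apply hpq
      funext i
      have h1 := freq_basis b (p - q) i
      rw [h0, zero_apply] at h1
      have h2 : (p - q) i = 0 := by exact_mod_cast h1.symm
      exact sub_eq_zero.mp h2
    · refine (norm_freq_le b (p - q) (n := n) fun i => ?_).trans ?_
      · simp only [box, Fintype.mem_piFinset, Finset.mem_Ico] at hp hq
        have h1 := hp i
        have h2 := hq i
        have h3 : |(p - q) i| ≤ (n : ℤ) := by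
          rw [Pi.sub_apply, abs_le]; constructor <;> omega
        exact_mod_cast h3
      · calc (n : ℝ) * B ≤ K * (δ⁻¹) ^ 2 * B := by gcongr
          _ = B * K * (δ⁻¹) ^ 2 := by ring
          _ ≤ D := hDB
  have hγ : Continuous fun t : ℝ => (QuotientAddGroup.mk (t • α) : EuclideanSpace ℝ (Fin l) ⧸ Λ) :=
    QuotientAddGroup.continuous_mk.comp (continuous_id.smul continuous_const)
  -- Normalising `f` to vanish at the origin makes `f` bounded in terms of its Lipschitz constant.
  have hg : LipschitzWith C fun x => f x - f 0 := by
    intro x y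
    simpa using hf x y
  have hM : ∀ x, |f x - f 0| ≤ C * W := by
    intro x
    have h1 := hf.dist_le_mul x 0
    rw [Real.dist_eq, dist_zero_right] at h1
    refine h1.trans ?_
    gcongr
    linarith [norm_quotient_le_sum hb x]
  have key := average_sub_le hχ (box _ n) (box_nonempty hn0) hg hM (by positivity) hγ hN0 hav hη
  have hfi : IntervalIntegrable (fun t : ℝ => f (QuotientAddGroup.mk (t • α)))
      volume N₀ (N₀ + N) := (hf.continuous.comp hγ).intervalIntegrable _ _
  rw [intervalIntegral.integral_sub hfi intervalIntegrable_const,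
    integral_sub (integrable_of_cont hf.continuous) (integrable_const _)] at key
  simp only [intervalIntegral.integral_const, add_sub_cancel_left, smul_eq_mul, integral_const,
    probReal_univ, one_mul] at key
  have hL : (1 / N) * ((∫ t in N₀..(N₀ + N), f (QuotientAddGroup.mk (t • α))) - N * f 0)
      - ((∫ v, f v ∂μ) - f 0)
      = (1 / N) * (∫ t in N₀..(N₀ + N), f (QuotientAddGroup.mk (t • α))) - ∫ v, f v ∂μ := by
    field_simp
    ring
  rw [hL] at key
  refine key.trans ?_
  have hcard : ((box (Fin (Module.finrank ℝ (EuclideanSpace ℝ (Fin l)))) n).card : ℝ)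
      ≤ K ^ l * (δ⁻¹) ^ (2 * l) := by
    rw [card_box, Fintype.card_fin, finrank_euclideanSpace_fin, pow_mul, ← mul_pow]
    push_cast
    gcongr
  have hfin : W * (box (Fin (Module.finrank ℝ (EuclideanSpace ℝ (Fin l)))) n).card * (1 / D)
      ≤ δ / 2 := by
    rw [mul_one_div, div_le_iff₀ hD0]
    calc W * ((box (Fin (Module.finrank ℝ (EuclideanSpace ℝ (Fin l)))) n).card : ℝ)
        ≤ W * (K ^ l * (δ⁻¹) ^ (2 * l)) := by gcongr
      _ = δ / 2 * (2 * W * K ^ l * (δ⁻¹) ^ (2 * l + 1)) := by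
          rw [pow_succ]; field_simp
      _ ≤ δ / 2 * D := by gcongr
  calc _ = C * (δ / 2)
        + C * (W * (box (Fin (Module.finrank ℝ (EuclideanSpace ℝ (Fin l)))) n).card * (1 / D)) := by
        ring
    _ ≤ C * (δ / 2) + C * (δ / 2) := by gcongr
    _ = C * δ := by ring
end

section
/- Let w : ℝ² → ℝ be a continuously differentiable function with compact support contained in (−1,1)², and let τ ∈ ℂ with Re(τ) > 1. Then ∫_{−1}^{1} ∫_{0}^{1} log(1/x₂) · x₂^{τ−2} · w(x₁,x₂) dx₂ dx₁ = (τ−1)⁻¹ ∫_{−1}^{1} ∫_{0}^{1} (∂w/∂x₂)(x₁,x₂) · log(x₂) · x₂^{τ−1} dx₂ dx₁ + (τ−1)⁻² ∫_{−1}^{1} ∫_{0}^{1} (−∂w/∂x₂)(x₁,x₂) · x₂^{τ−1} dx₂ dx₁, where x₂^{τ} := exp(τ · log x₂) for x₂ > 0. -/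
open MeasureTheory intervalIntegral

/-!
Put `s = τ - 1`, so `Re s > 0`. On `(0, 1)` the weight `log x * x ^ (s - 1)` is the derivative of
`V x = s⁻¹ * (log x * x ^ s) - s⁻² * x ^ s`, which is continuous on `[0, 1]` with `V 0 = 0`
(`continuousOn_log_mul_cpow`). For fixed `x₁`, integrating by parts in `x₂` against `w (x₁, ·)`
leaves no boundary term, since `V 0 = 0` and `w (x₁, 1) = 0`; this is `inner_by_parts`.

The integral in `x₁` may then be split by linearity: both inner integrals on the right are
continuous in `x₁` (`continuous_innerIntegral`), because their integrands are continuous functions on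
`ℝ × [0, 1]`.
-/

/-- `x ↦ log x * x ^ s` is continuous up to `0` when `Re s > 0`, its (junk) value there being the
limit `0`. -/
lemma continuousOn_log_mul_cpow {s : ℂ} (hs : 0 < s.re) :
    ContinuousOn (fun x : ℝ => (Real.log x : ℂ) * (x : ℂ) ^ s) (Set.Ici 0) := by
  intro x hx
  rcases eq_or_lt_of_le (Set.mem_Ici.mp hx) with rfl | hx
  · rw [← continuousWithinAt_Ioi_iff_Ici, ContinuousWithinAt]
    simp only [Real.log_zero, Complex.ofReal_zero, zero_mul]
    rw [tendsto_zero_iff_norm_tendsto_zero]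
    have h := (tendsto_log_mul_rpow_nhdsGT_zero hs).norm
    rw [norm_zero] at h
    refine h.congr' ?_
    filter_upwards [self_mem_nhdsWithin] with y hy
    have hy : 0 < y := hy
    rw [norm_mul, norm_mul, Complex.norm_real, Complex.norm_cpow_eq_rpow_re_of_pos hy,
      Real.norm_of_nonneg (Real.rpow_nonneg hy.le _)]
  · refine ContinuousAt.continuousWithinAt (ContinuousAt.mul ?_ ?_)
    · exact Complex.continuous_ofReal.continuousAt.comp (Real.continuousAt_log hx.ne')
    · exact Complex.continuousAt_ofReal_cpow_const x s (Or.inr hx.ne')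

lemma continuous_ofReal_cpow {s : ℂ} (hs : 0 < s.re) :
    Continuous (fun x : ℝ => (x : ℂ) ^ s) :=
  Complex.continuous_ofReal_cpow_const hs

lemma intervalIntegrable_log_mul_cpow {s : ℂ} (hs : 0 < s.re) :
    IntervalIntegrable (fun x : ℝ => (Real.log x : ℂ) * (x : ℂ) ^ (s - 1)) volume 0 1 := by
  have hs2 : 0 < (s / 2).re := by simpa using hs
  have h1 : IntervalIntegrable (fun x : ℝ => (x : ℂ) ^ (s / 2 - 1)) volume 0 1 :=
    intervalIntegrable_cpow' (by rw [Complex.sub_re, Complex.one_re]; linarith)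
  -- `log x * x ^ (s - 1)` is the continuous `log x * x ^ (s / 2)` times the integrable
  -- `x ^ (s / 2 - 1)`.
  have h2 := h1.continuousOn_mul ((continuousOn_log_mul_cpow hs2).mono
    (by rw [Set.uIcc_of_le zero_le_one]; exact Set.Icc_subset_Ici_self))
  refine h2.congr ?_
  rw [Set.uIoc_of_le zero_le_one]
  intro x hx
  have hx0 : (x : ℂ) ≠ 0 := by exact_mod_cast hx.1.ne'
  simp only
  rw [mul_assoc, ← Complex.cpow_add _ _ hx0]
  congr 2
  ring

lemma hasDerivAt_antideriv {s : ℂ} (hs : s ≠ 0) {x : ℝ} (hx : 0 < x) :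
    HasDerivAt (fun x : ℝ => s⁻¹ * ((Real.log x : ℂ) * (x : ℂ) ^ s) - s⁻¹ ^ 2 * (x : ℂ) ^ s)
      ((Real.log x : ℂ) * (x : ℂ) ^ (s - 1)) x := by
  have hx0 : (x : ℂ) ≠ 0 := by exact_mod_cast hx.ne'
  have hp : HasDerivAt (fun x : ℝ => (x : ℂ) ^ s) (s * (x : ℂ) ^ (s - 1)) x := by
    have h := (hasDerivAt_id (x : ℂ)).cpow_const (c := s) (Complex.ofReal_mem_slitPlane.2 hx)
    simpa using h.comp_ofReal
  have hl : HasDerivAt (fun x : ℝ => (Real.log x : ℂ)) ((x⁻¹ : ℝ) : ℂ) x :=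
    (Real.hasDerivAt_log hx.ne').ofReal_comp
  refine (((hl.mul hp).const_mul s⁻¹).sub (hp.const_mul (s⁻¹ ^ 2))).congr_deriv ?_
  have : (x : ℂ) ^ s = x * (x : ℂ) ^ (s - 1) := by
    rw [Complex.cpow_sub _ _ hx0, Complex.cpow_one]; field_simp
  rw [this]
  push_cast
  field_simp
  ring

/-- The identity on a single line `x₁ = const`. -/
lemma inner_by_parts {s : ℂ} (hs : 0 < s.re) {f : ℝ → ℝ} (hf : ContDiff ℝ 1 f) (hf1 : f 1 = 0) :
    (∫ x in (0 : ℝ)..1, (Real.log (1 / x) : ℂ) * (x : ℂ) ^ (s - 1) * (f x : ℂ))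
      = s⁻¹ * (∫ x in (0 : ℝ)..1, ((deriv f x : ℝ) : ℂ) * (Real.log x : ℂ) * (x : ℂ) ^ s)
        + s⁻¹ ^ 2 * (∫ x in (0 : ℝ)..1, ((-(deriv f x) : ℝ) : ℂ) * (x : ℂ) ^ s) := by
  have hs0 : s ≠ 0 := by rintro rfl; simp at hs
  have hfd : Continuous (deriv f) := hf.continuous_deriv le_rfl
  have hlog : ContinuousOn (fun x : ℝ => (Real.log x : ℂ) * (x : ℂ) ^ s) (Set.uIcc 0 1) :=
    (continuousOn_log_mul_cpow hs).mono
      (by rw [Set.uIcc_of_le zero_le_one]; exact Set.Icc_subset_Ici_self)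
  have hpow := continuous_ofReal_cpow hs
  have hfdC : Continuous (fun x => ((deriv f x : ℝ) : ℂ)) := Complex.continuous_ofReal.comp hfd
  have key := integral_mul_deriv_eq_deriv_mul_of_hasDerivAt (a := 0) (b := 1)
    (u := fun x => (f x : ℂ)) (u' := fun x => ((deriv f x : ℝ) : ℂ))
    (v := fun x : ℝ => s⁻¹ * ((Real.log x : ℂ) * (x : ℂ) ^ s) - s⁻¹ ^ 2 * (x : ℂ) ^ s)
    (v' := fun x : ℝ => (Real.log x : ℂ) * (x : ℂ) ^ (s - 1))
    (Complex.continuous_ofReal.comp hf.continuous).continuousOn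
    ((hlog.const_mul _).sub (hpow.const_mul _).continuousOn)
    (fun x _ => ((hf.differentiable one_ne_zero) x).hasDerivAt.ofReal_comp)
    (fun x hx => hasDerivAt_antideriv hs0 (by simpa using hx.1))
    (hfdC.intervalIntegrable _ _)
    (intervalIntegrable_log_mul_cpow hs)
  have hL : (∫ x in (0 : ℝ)..1, (Real.log (1 / x) : ℂ) * (x : ℂ) ^ (s - 1) * (f x : ℂ))
      = -∫ x in (0 : ℝ)..1, (f x : ℂ) * ((Real.log x : ℂ) * (x : ℂ) ^ (s - 1)) := by
    rw [← intervalIntegral.integral_neg]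
    congr 1
    ext x
    rw [one_div, Real.log_inv]
    push_cast
    ring
  rw [hL, key, ← intervalIntegral.integral_const_mul, ← intervalIntegral.integral_const_mul,
    ← intervalIntegral.integral_add]
  · simp only [hf1, Complex.ofReal_zero, zero_mul, Real.log_zero, Complex.zero_cpow hs0, mul_zero,
      sub_zero, zero_sub, neg_neg]
    congr 1
    ext x
    push_cast
    ring
  · refine ContinuousOn.intervalIntegrable ?_
    simp only [mul_assoc]
    exact (hfdC.continuousOn.mul hlog).const_mul s⁻¹
  · refine Continuous.intervalIntegrable ?_ _ _
    exact ((Complex.continuous_ofReal.comp hfd.neg).mul hpow).const_mul _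

/-- A parametric integral over `[0, 1]` with kernel continuous only on `[0, 1]` is continuous. -/
lemma continuous_innerIntegral {A : ℝ → ℂ} (hA : ContinuousOn A (Set.Icc 0 1)) {g : ℝ × ℝ → ℝ}
    (hg : Continuous g) :
    Continuous (fun x₁ : ℝ => ∫ x₂ in (0 : ℝ)..1, (g (x₁, x₂) : ℂ) * A x₂) := by
  -- Off `[0, 1]` the kernel is replaced by its constant extension.
  let B : ℝ → ℂ := Set.IccExtend zero_le_one ((Set.Icc (0 : ℝ) 1).domRestrict A)
  have hB : Continuous B := (continuousOn_iff_continuous_domRestrict.1 hA).Icc_extend'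
  have hEq : (fun x₁ : ℝ => ∫ x₂ in (0 : ℝ)..1, (g (x₁, x₂) : ℂ) * A x₂)
      = fun x₁ : ℝ => ∫ x₂ in (0 : ℝ)..1, (g (x₁, x₂) : ℂ) * B x₂ := by
    ext x₁
    refine intervalIntegral.integral_congr fun x hx => ?_
    rw [Set.uIcc_of_le zero_le_one] at hx
    simp only [B, Set.IccExtend_of_mem _ _ hx, Set.domRestrict_apply]
  rw [hEq]
  refine intervalIntegral.continuous_parametric_intervalIntegral_of_continuous' ?_ 0 1
  exact (Complex.continuous_ofReal.comp hg).mul (hB.comp continuous_snd)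

lemma continuous_partial_deriv {w : ℝ × ℝ → ℝ} (hw : ContDiff ℝ 1 w) :
    Continuous (fun p : ℝ × ℝ => deriv (fun y => w (p.1, y)) p.2) := by
  have h : (fun p : ℝ × ℝ => deriv (fun y => w (p.1, y)) p.2)
      = fun p => fderiv ℝ w p (0, 1) := by
    ext p
    have h1 : HasDerivAt (fun y : ℝ => (p.1, y)) ((0 : ℝ), (1 : ℝ)) p.2 :=
      (hasDerivAt_const p.2 p.1).prodMk (hasDerivAt_id p.2)
    exact (((hw.differentiable one_ne_zero) p).hasFDerivAt.comp_hasDerivAt p.2 h1).deriv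
  rw [h]
  exact (hw.continuous_fderiv one_ne_zero).clm_apply continuous_const

/-- Integration by parts identity: for `w : ℝ² → ℝ` continuously differentiable with
compact support inside `(−1,1)²` and `τ ∈ ℂ` with `Re τ > 1`,
`∫∫ log(1/x₂)·x₂^{τ−2}·w = (τ−1)⁻¹ ∫∫ (∂w/∂x₂)·log(x₂)·x₂^{τ−1}
  + (τ−1)⁻² ∫∫ (−∂w/∂x₂)·x₂^{τ−1}`. -/
theorem integration_by_parts_log_weight (w : ℝ × ℝ → ℝ)
    (hw : ContDiff ℝ 1 w)
    (hsupp : tsupport w ⊆ Set.Ioo (-1 : ℝ) 1 ×ˢ Set.Ioo (-1 : ℝ) 1)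
    (τ : ℂ) (hτ : 1 < τ.re) :
    (∫ x₁ in (-1 : ℝ)..1, ∫ x₂ in (0 : ℝ)..1,
        (Real.log (1 / x₂) : ℂ) * (x₂ : ℂ) ^ (τ - 2) * (w (x₁, x₂) : ℂ))
      = (τ - 1)⁻¹ * (∫ x₁ in (-1 : ℝ)..1, ∫ x₂ in (0 : ℝ)..1,
            ((deriv (fun y => w (x₁, y)) x₂ : ℝ) : ℂ) * (Real.log x₂ : ℂ) * (x₂ : ℂ) ^ (τ - 1))
        + ((τ - 1)⁻¹) ^ 2 * (∫ x₁ in (-1 : ℝ)..1, ∫ x₂ in (0 : ℝ)..1,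
            ((-(deriv (fun y => w (x₁, y)) x₂) : ℝ) : ℂ) * (x₂ : ℂ) ^ (τ - 1)) := by
  have hs : 0 < (τ - 1).re := by rw [Complex.sub_re, Complex.one_re]; linarith
  have hg := continuous_partial_deriv hw
  have c1 : Continuous (fun x₁ : ℝ => ∫ x₂ in (0 : ℝ)..1,
      ((deriv (fun y => w (x₁, y)) x₂ : ℝ) : ℂ) * (Real.log x₂ : ℂ) * (x₂ : ℂ) ^ (τ - 1)) := by
    simp only [mul_assoc]
    exact continuous_innerIntegral ((continuousOn_log_mul_cpow hs).mono Set.Icc_subset_Ici_self) hg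
  have c2 : Continuous (fun x₁ : ℝ => ∫ x₂ in (0 : ℝ)..1,
      ((-(deriv (fun y => w (x₁, y)) x₂) : ℝ) : ℂ) * (x₂ : ℂ) ^ (τ - 1)) :=
    continuous_innerIntegral (continuous_ofReal_cpow hs).continuousOn hg.neg
  rw [← intervalIntegral.integral_const_mul, ← intervalIntegral.integral_const_mul,
    ← intervalIntegral.integral_add ((c1.const_mul _).intervalIntegrable _ _)
      ((c2.const_mul _).intervalIntegrable _ _)]
  congr 1
  ext x₁
  have hf : ContDiff ℝ 1 (fun y => w (x₁, y)) := hw.comp (contDiff_const.prodMk contDiff_id)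
  have hf1 : w (x₁, 1) = 0 := by
    refine image_eq_zero_of_notMem_tsupport fun h => ?_
    exact lt_irrefl _ (hsupp h).2.2
  have h := inner_by_parts hs hf hf1
  rwa [show τ - 1 - 1 = τ - 2 by ring] at h
end
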